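/- In the Edwards setting, suppose the cone F contains all negative constant functions, and let g : X → (−∞, +∞] be lower semicontinuous. Then S_x(g) = I_x(g) for every x ∈ X. -/

import Mathlib

open MeasureTheory Filter Set
open scoped ENNReal

noncomputable section

/-- The nonnegative part of an extended real, as an element of `ℝ≥0∞`. -/
def erealToENNReal (x : EReal) : ℝ≥0∞ := if x = ⊤ then ⊤ else ENNReal.ofReal x.toReal

/-- The integral of an `EReal`-valued function: upper Lebesgue integral of the positive part
minus that of the negative part. -/
def erealIntegral {α : Type*} [MeasurableSpace α] (μ : Measure α) (f : α → EReal) : EReal :=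
  ((∫⁻ a, erealToENNReal (f a) ∂μ : ℝ≥0∞) : EReal) -
    ((∫⁻ a, erealToENNReal (-(f a)) ∂μ : ℝ≥0∞) : EReal)

/-- The Edwards setting: `F` is a cone of upper bounded, upper semicontinuous functions on `X`
with values in `[-∞, ∞)` (not necessarily containing the zero function). -/
def IsEdwardsCone {X : Type*} [TopologicalSpace X] (F : Set (X → EReal)) : Prop :=
  (∀ u ∈ F, UpperSemicontinuous u) ∧
  (∀ u ∈ F, ∃ K : ℝ, ∀ x, u x ≤ (K : EReal)) ∧
  (∀ u ∈ F, ∀ c : ℝ, 0 < c → (fun x => (c : EReal) * u x) ∈ F) ∧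
  (∀ u ∈ F, ∀ v ∈ F, (fun x => u x + v x) ∈ F)

/-- `M_x^F`: the positive (Borel) measures `μ` on `X` with `u(x) ≤ ∫ u dμ` for all `u ∈ F`. -/
def edwardsM {X : Type*} [MeasurableSpace X] (F : Set (X → EReal)) (x : X) :
    Set (Measure X) :=
  { μ | ∀ u ∈ F, u x ≤ erealIntegral μ u }

/-- `S_x(g) = sup { u(x) : u ∈ F, u ≤ g }` (`= -∞`, i.e. `sSup ∅`, if no `u ∈ F` satisfies
`u ≤ g`). -/
def edwardsS {X : Type*} (F : Set (X → EReal)) (x : X) (g : X → EReal) : EReal :=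
  sSup { t : EReal | ∃ u ∈ F, (∀ y, u y ≤ g y) ∧ t = u x }

/-- `I_x(g) = inf { ∫ g dμ : μ ∈ M_x^F }`. -/
def edwardsI {X : Type*} [MeasurableSpace X] (F : Set (X → EReal)) (x : X)
    (g : X → EReal) : EReal :=
  sInf { t : EReal | ∃ μ ∈ edwardsM F x, t = erealIntegral μ g }

/-- `C_x^F = { μ ∈ M_x^F : μ(X) ≤ -S_x(-𝟙) }`. -/
def edwardsC {X : Type*} [MeasurableSpace X] (F : Set (X → EReal)) (x : X) :
    Set (Measure X) :=
  { μ | μ ∈ edwardsM F x ∧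
      ((μ Set.univ : ℝ≥0∞) : EReal) ≤ -(edwardsS F x (fun _ => (-1 : EReal))) }

/-- A lower semicontinuous function on a metric space is the pointwise supremum of the
continuous functions below it. -/
lemma isLUB_continuousMap_le {X : Type*} [MetricSpace X] {h : X → ℝ≥0∞}
    (hh : LowerSemicontinuous h) :
    IsLUB {w : X → ℝ≥0∞ | ∃ φ : C(X, NNReal), w = (fun y => (φ y : ℝ≥0∞)) ∧
      ∀ y, (φ y : ℝ≥0∞) ≤ h y} h := by
  refine ⟨?_, fun b hb y => le_of_forall_lt fun c hc => ?_⟩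
  · rintro w ⟨φ, rfl, hφ⟩
    exact hφ
  obtain ⟨a, hca, hah⟩ := ENNReal.lt_iff_exists_nnreal_btwn.1 hc
  obtain ⟨f, hf0, hf1, hf⟩ := exists_continuous_zero_one_of_isClosed
    (s := (h ⁻¹' Ioi (a : ℝ≥0∞))ᶜ) (t := {y}) (hh.isOpen_preimage _).isClosed_compl
    isClosed_singleton (by simpa using hah)
  let φ : C(X, NNReal) := ⟨fun z => a * (f z).toNNReal, by fun_prop⟩
  have hφ : ∀ z, (φ z : ℝ≥0∞) ≤ h z := by
    intro z
    by_cases hz : z ∈ h ⁻¹' Ioi (a : ℝ≥0∞)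
    · refine le_trans ?_ (le_of_lt hz)
      have : (f z).toNNReal ≤ 1 := Real.toNNReal_le_one.2 (hf z).2
      exact_mod_cast mul_le_of_le_one_right' this
    · have : f z = 0 := hf0 hz
      simp [φ, this]
  have hy : φ y = a := by
    have : f y = 1 := hf1 rfl
    simp [φ, this]
  have := hb ⟨φ, rfl, hφ⟩ y
  simp only [hy] at this
  exact hca.trans_le this

/-- The integral of a lower semicontinuous function is determined by the continuous functions
below it. -/
lemma lintegral_le_of_forall_continuousMap_le {X : Type*} [MetricSpace X] [CompactSpace X]
    [MeasurableSpace X] [BorelSpace X] {μ : Measure X} {h : X → ℝ≥0∞}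
    (hh : LowerSemicontinuous h) {t : ℝ≥0∞}
    (ht : ∀ φ : C(X, NNReal), (∀ y, (φ y : ℝ≥0∞) ≤ h y) → ∫⁻ y, φ y ∂μ ≤ t) :
    ∫⁻ y, h y ∂μ ≤ t := by
  obtain ⟨S, hS, hScount, hSlub⟩ := exists_countable_lowerSemicontinuous_isLUB
    (by
      rintro w ⟨φ, rfl, -⟩
      exact (ENNReal.continuous_coe.comp φ.continuous).lowerSemicontinuous)
    (isLUB_continuousMap_le hh)
  obtain ⟨w, hw⟩ := (hScount.insert (fun _ => 0)).exists_eq_range (insert_nonempty _ _)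
  have hwφ : ∀ n, ∃ φ : C(X, NNReal), w n = (fun y => (φ y : ℝ≥0∞)) ∧
      ∀ y, (φ y : ℝ≥0∞) ≤ h y := by
    intro n
    have hn : w n ∈ insert (fun _ => 0) S := hw ▸ mem_range_self n
    rcases hn with hn | hn
    · exact ⟨0, by simp [hn], by simp⟩
    · exact hS hn
  choose φ hφ hφle using hwφ
  have hle : ∀ n y, (partialSups φ n y : ℝ≥0∞) ≤ h y := by
    intro n y
    induction n with
    | zero => simpa using hφle 0 y
    | succ n ih =>
      rw [partialSups_add_one, ContinuousMap.sup_apply, ENNReal.coe_max]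
      exact max_le ih (hφle _ y)
  have hsup : h = fun y => ⨆ n, (partialSups φ n y : ℝ≥0∞) := by
    refine le_antisymm (hSlub.2 fun v hv => ?_) fun y => iSup_le fun n => hle n y
    obtain ⟨n, rfl⟩ : v ∈ range w := hw ▸ mem_insert_of_mem _ hv
    intro y
    refine le_iSup_of_le n ?_
    rw [hφ n]
    exact ENNReal.coe_le_coe.2 (le_partialSups φ n y)
  have hmeas : ∀ n, Measurable fun y => (partialSups φ n y : ℝ≥0∞) := fun n =>
    (ENNReal.continuous_coe.comp (partialSups φ n).continuous).measurable
  rw [hsup, lintegral_iSup hmeas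
    (fun m n hmn y => ENNReal.coe_le_coe.2 ((partialSups φ).monotone hmn y))]
  exact iSup_le fun n => ht _ (hle n)

lemma erealToENNReal_eq : erealToENNReal = EReal.toENNReal := rfl

lemma erealIntegral_mono {α : Type*} [MeasurableSpace α] (μ : Measure α) {f g : α → EReal}
    (h : ∀ a, f a ≤ g a) : erealIntegral μ f ≤ erealIntegral μ g := by
  unfold erealIntegral
  rw [erealToENNReal_eq]
  refine EReal.sub_le_sub (EReal.coe_ennreal_le_coe_ennreal_iff.2 (lintegral_mono fun a => ?_))
    (EReal.coe_ennreal_le_coe_ennreal_iff.2 (lintegral_mono fun a => ?_))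
  · exact EReal.toENNReal_le_toENNReal (h a)
  · exact EReal.toENNReal_le_toENNReal (EReal.neg_le_neg_iff.2 (h a))

lemma EReal.toENNReal_add_coe_add_toENNReal_neg {a : EReal} {k : ℝ} (hk : 0 ≤ k)
    (ha : ((-k : ℝ) : EReal) ≤ a) :
    (a + (k : EReal)).toENNReal + (-a).toENNReal = a.toENNReal + ENNReal.ofReal k := by
  induction a with
  | bot => simp at ha
  | top => simp
  | coe a =>
    have ha : -k ≤ a := by exact_mod_cast ha
    rw [← EReal.coe_add, ← EReal.coe_neg]
    simp only [EReal.real_coe_toENNReal]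
    rcases le_total 0 a with h | h
    · rw [ENNReal.ofReal_of_nonpos (p := -a) (by linarith), add_zero, ENNReal.ofReal_add h hk]
    · rw [ENNReal.ofReal_of_nonpos (p := a) h, zero_add, ← ENNReal.ofReal_add (by linarith)
        (by linarith)]
      congr 1
      ring

/-- A lower semicontinuous function bounded below has integral at most `s` as soon as every
continuous function below it does. -/
lemma erealIntegral_le_of_forall_continuousMap_le {X : Type*} [MetricSpace X] [CompactSpace X]
    [MeasurableSpace X] [BorelSpace X] {μ : Measure X} [IsFiniteMeasure μ] {f : X → EReal}
    (hf : LowerSemicontinuous f) {k : ℝ} (hk : 0 ≤ k) (hfk : ∀ y, ((-k : ℝ) : EReal) ≤ f y)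
    {s : ℝ} (hs : ∀ φ : C(X, ℝ), (∀ y, (φ y : EReal) ≤ f y) → ∫ y, φ y ∂μ ≤ s) :
    erealIntegral μ f ≤ s := by
  have hs0 : 0 ≤ s + k * μ.real univ := by
    have := hs (ContinuousMap.const X (-k)) hfk
    simp only [ContinuousMap.const_apply, integral_const, smul_eq_mul] at this
    linarith
  have hlsc : LowerSemicontinuous fun y => (f y + (k : EReal)).toENNReal := by
    refine EReal.continuous_toENNReal.comp_lowerSemicontinuous (f := fun y => f y + (k : EReal)) ?_
      fun a b => EReal.toENNReal_le_toENNReal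
    have hc : Continuous fun a : EReal => a + (k : EReal) := continuous_iff_continuousAt.2 fun a =>
      (EReal.continuousAt_add (p := (a, (k : EReal))) (by simp) (by simp)).comp
        (f := fun a : EReal => (a, (k : EReal))) (by fun_prop)
    exact hc.comp_lowerSemicontinuous hf fun a b h => add_le_add_left h _
  have hshift : ∫⁻ y, (f y + (k : EReal)).toENNReal ∂μ ≤ ENNReal.ofReal (s + k * μ.real univ) := by
    refine lintegral_le_of_forall_continuousMap_le hlsc fun φ hφ => ?_
    let ψ : C(X, ℝ) := ⟨fun y => (φ y : ℝ) - k, by fun_prop⟩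
    have hint : Integrable (fun y => (φ y : ℝ)) μ :=
      (show Continuous fun y => (φ y : ℝ) by fun_prop).integrable_of_hasCompactSupport
        (HasCompactSupport.of_compactSpace _)
    have hψ := hs ψ fun y => by
      have h0 : (0 : EReal) ≤ f y + (k : EReal) := by
        have := add_le_add_left (hfk y) (k : EReal)
        rwa [← EReal.coe_add, neg_add_cancel, EReal.coe_zero] at this
      have h1 := EReal.coe_ennreal_le_coe_ennreal_iff.2 (hφ y)
      rw [EReal.coe_toENNReal h0] at h1
      have h2 : ((φ y : ℝ≥0∞) : EReal) = ((φ y : ℝ) : EReal) := rfl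
      rw [h2] at h1
      simp only [ψ, ContinuousMap.coe_mk, EReal.coe_sub]
      exact EReal.sub_le_of_le_add h1
    simp only [ψ, ContinuousMap.coe_mk] at hψ
    rw [integral_sub hint (integrable_const _), integral_const, smul_eq_mul] at hψ
    have h3 := ofReal_integral_eq_lintegral_ofReal hint (ae_of_all _ fun y => (φ y).coe_nonneg)
    simp only [ENNReal.ofReal_coe_nnreal] at h3
    rw [← h3]
    exact ENNReal.ofReal_le_ofReal (by linarith)
  have hneg : ∫⁻ y, (-(f y)).toENNReal ∂μ ≠ ⊤ := by
    refine ne_top_of_le_ne_top (b := ∫⁻ _, ENNReal.ofReal k ∂μ) (by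
      rw [lintegral_const]; finiteness) (lintegral_mono fun y => ?_)
    have := EReal.neg_le_neg_iff.2 (hfk y)
    rw [← EReal.coe_neg, neg_neg] at this
    exact EReal.toENNReal_le_toENNReal this
  have hsum : ∫⁻ y, (f y + (k : EReal)).toENNReal ∂μ + ∫⁻ y, (-(f y)).toENNReal ∂μ =
      ∫⁻ y, (f y).toENNReal ∂μ + ENNReal.ofReal k * μ univ := by
    rw [← lintegral_add_left hlsc.measurable, ← lintegral_const,
      ← lintegral_add_right _ measurable_const]
    exact lintegral_congr fun y => EReal.toENNReal_add_coe_add_toENNReal_neg hk (hfk y)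
  have hle : ∫⁻ y, (f y).toENNReal ∂μ + ENNReal.ofReal k * μ univ ≤
      ENNReal.ofReal (s + k * μ.real univ) + ∫⁻ y, (-(f y)).toENNReal ∂μ := by
    rw [← hsum]
    gcongr
  have hpos : ∫⁻ y, (f y).toENNReal ∂μ ≠ ⊤ := by
    refine ne_top_of_le_ne_top ?_ (le_self_add.trans hle)
    finiteness
  unfold erealIntegral
  rw [erealToENNReal_eq]
  lift ∫⁻ y, (f y).toENNReal ∂μ to NNReal using hpos with A
  lift ∫⁻ y, (-(f y)).toENNReal ∂μ to NNReal using hneg with B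
  have hreal := ENNReal.toReal_mono (by finiteness) hle
  rw [ENNReal.toReal_add (by finiteness) (by finiteness),
    ENNReal.toReal_add (by finiteness) (by finiteness), ENNReal.toReal_ofReal hs0,
    ENNReal.toReal_mul, ENNReal.toReal_ofReal hk] at hreal
  change (((A : ℝ) : EReal) - ((B : ℝ) : EReal)) ≤ _
  rw [← EReal.coe_sub, EReal.coe_le_coe_iff]
  simp only [ENNReal.coe_toReal, Measure.real] at hreal
  linarith

/-- A finite measure dominates `a` on an upper bounded upper semicontinuous function as soon as it
does so on every continuous function above it. -/
lemma le_erealIntegral_of_forall_le_continuousMap {X : Type*} [MetricSpace X] [CompactSpace X]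
    [MeasurableSpace X] [BorelSpace X] {μ : Measure X} [IsFiniteMeasure μ] {u : X → EReal}
    (hu : UpperSemicontinuous u) {k : ℝ} (hk : 0 ≤ k) (huk : ∀ y, u y ≤ (k : EReal))
    {a : ℝ} (ha : ∀ φ : C(X, ℝ), (∀ y, u y ≤ (φ y : EReal)) → a ≤ ∫ y, φ y ∂μ) :
    (a : EReal) ≤ erealIntegral μ u := by
  have hneg : erealIntegral μ (fun y => -(u y)) ≤ ((-a : ℝ) : EReal) := by
    refine erealIntegral_le_of_forall_continuousMap_le
      (continuous_neg.comp_upperSemicontinuous_antitone hu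
        fun _ _ h => EReal.neg_le_neg_iff.2 h) hk (fun y => ?_) fun φ hφ => ?_
    · rw [EReal.coe_neg]
      exact EReal.neg_le_neg_iff.2 (huk y)
    · have := ha (-φ) fun y => by
        simpa using EReal.le_neg_of_le_neg (hφ y)
      simp only [ContinuousMap.neg_apply, integral_neg] at this
      linarith
  have hpos : ∫⁻ y, (u y).toENNReal ∂μ ≠ ⊤ :=
    ne_top_of_le_ne_top (b := ∫⁻ _, ENNReal.ofReal k ∂μ) (by rw [lintegral_const]; finiteness)
      (lintegral_mono fun y => EReal.toENNReal_le_toENNReal (huk y))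
  unfold erealIntegral at hneg ⊢
  rw [erealToENNReal_eq] at *
  simp only [neg_neg] at hneg
  rw [EReal.coe_neg] at hneg
  rw [← EReal.neg_le_neg_iff, EReal.neg_sub (by simp) (by simp [hpos]), add_comm,
    ← sub_eq_add_neg]
  exact hneg

open scoped CompactlySupported

/-- The cone of pairs `(φ, r)` such that, up to arbitrarily small errors, `φ + l • g` lies above
some `u ∈ F` with `u x ≥ l * s - r`, for some `l ≥ 0`. -/
def edwardsPointedCone {X : Type*} [TopologicalSpace X] (F : Set (X → EReal))
    (hF : IsEdwardsCone F) (hconst : ∀ c : ℝ, c < 0 → (fun _ : X => (c : EReal)) ∈ F)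
    (g : X → EReal) (x : X) (s : ℝ) : PointedCone ℝ (C_c(X, ℝ) × ℝ) where
  carrier := { p | ∀ ε : ℝ, 0 < ε → ∃ u ∈ F, ∃ l : ℝ, 0 ≤ l ∧
    (∀ y, u y ≤ (p.1 y : EReal) + (l : EReal) * g y) ∧ ((l * s - p.2 - ε : ℝ) : EReal) ≤ u x }
  zero_mem' := fun ε hε =>
    ⟨_, hconst (-ε) (neg_lt_zero.2 hε), 0, le_rfl, fun y => by simpa using hε.le, by simp⟩
  add_mem' := by
    rintro ⟨φ, r⟩ ⟨ψ, t⟩ hp hq ε hε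
    obtain ⟨u, hu, l, hl, hul, hux⟩ := hp (ε / 2) (by positivity)
    obtain ⟨v, hv, m, hm, hvm, hvx⟩ := hq (ε / 2) (by positivity)
    refine ⟨_, hF.2.2.2 u hu v hv, l + m, by positivity, fun y => ?_, ?_⟩
    · refine (add_le_add (hul y) (hvm y)).trans_eq ?_
      rw [EReal.coe_add l m, EReal.right_distrib_of_nonneg (by exact_mod_cast hl)
        (by exact_mod_cast hm)]
      simp only [Prod.mk_add_mk, CompactlySupportedContinuousMap.coe_add, Pi.add_apply,
        EReal.coe_add]
      abel
    · refine le_trans (le_of_eq ?_) (add_le_add hux hvx)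
      rw [← EReal.coe_add]
      congr 1
      simp only [Prod.mk_add_mk]
      ring
  smul_mem' := by
    rintro ⟨c, hc⟩ ⟨φ, r⟩ hp ε hε
    rcases hc.eq_or_lt with rfl | hc
    · refine ⟨_, hconst (-ε) (neg_lt_zero.2 hε), 0, le_rfl, fun y => ?_, ?_⟩
      · simpa [Nonneg.mk_smul] using hε.le
      · simp [Nonneg.mk_smul]
    obtain ⟨u, hu, l, hl, hul, hux⟩ := hp (ε / c) (by positivity)
    have hc' : (0 : EReal) ≤ c := by exact_mod_cast hc.le
    refine ⟨_, hF.2.2.1 u hu c hc, c * l, by positivity, fun y => ?_, ?_⟩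
    · refine (mul_le_mul_of_nonneg_left (hul y) hc').trans_eq ?_
      rw [EReal.left_distrib_of_nonneg_of_ne_top hc' (EReal.coe_ne_top c), ← mul_assoc,
        ← EReal.coe_mul, ← EReal.coe_mul]
      rfl
    · refine le_trans (le_of_eq ?_) (mul_le_mul_of_nonneg_left hux hc')
      rw [← EReal.coe_mul]
      congr 1
      simp only [Nonneg.mk_smul, Prod.smul_mk, smul_eq_mul]
      field_simp

/-- Hahn–Banach step: a positive functional dominating the evaluations at `x` of the elements of
`F`, and bounded by `s = S_x(g)` on the continuous functions below `g`. -/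
lemma exists_positiveLinearMap_of_edwardsS_eq {X : Type*} [TopologicalSpace X] [CompactSpace X]
    (F : Set (X → EReal)) (hF : IsEdwardsCone F)
    (hconst : ∀ c : ℝ, c < 0 → (fun _ : X => (c : EReal)) ∈ F)
    (g : X → EReal) (x : X) {s : ℝ} (hs : edwardsS F x g = s) :
    ∃ Λ : C_c(X, ℝ) →ₚ[ℝ] ℝ,
      (∀ u ∈ F, ∀ a : ℝ, (a : EReal) ≤ u x → ∀ φ : C_c(X, ℝ),
        (∀ y, u y ≤ (φ y : EReal)) → a ≤ Λ φ) ∧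
      ∀ φ : C_c(X, ℝ), (∀ y, (φ y : EReal) ≤ g y) → Λ φ ≤ s := by
  have hdom : ∀ r : ℝ, ((0 : C_c(X, ℝ)), r) ∈ edwardsPointedCone F hF hconst g x s → 0 ≤ r := by
    intro r hr
    refine le_of_forall_pos_le_add fun ε hε => ?_
    obtain ⟨u, hu, l, hl, hul, hux⟩ := hr ε hε
    simp only [CompactlySupportedContinuousMap.coe_zero, Pi.zero_apply, EReal.coe_zero,
      zero_add] at hul
    have key : ((l * s - r - ε : ℝ) : EReal) ≤ ((l * s : ℝ) : EReal) := by
      refine hux.trans ?_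
      rcases hl.eq_or_lt with rfl | hl
      · simpa using hul x
      have hl' : (0 : EReal) ≤ (l⁻¹ : ℝ) := by exact_mod_cast (inv_pos.2 hl).le
      have hmem : ((l⁻¹ : ℝ) : EReal) * u x ≤ edwardsS F x g := by
        refine le_sSup ⟨_, hF.2.2.1 u hu l⁻¹ (inv_pos.2 hl), fun y => ?_, rfl⟩
        refine (mul_le_mul_of_nonneg_left (hul y) hl').trans_eq ?_
        rw [← mul_assoc, ← EReal.coe_mul, inv_mul_cancel₀ hl.ne', EReal.coe_one, one_mul]
      rw [hs] at hmem
      have := mul_le_mul_of_nonneg_left hmem (show (0 : EReal) ≤ l by exact_mod_cast hl.le)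
      rwa [← mul_assoc, ← EReal.coe_mul, mul_inv_cancel₀ hl.ne', EReal.coe_one, one_mul,
        ← EReal.coe_mul] at this
    have := EReal.coe_le_coe_iff.1 key
    linarith
  let f : (C_c(X, ℝ) × ℝ) →ₗ.[ℝ] ℝ :=
    { domain := LinearMap.ker (LinearMap.fst ℝ C_c(X, ℝ) ℝ)
      toFun := (LinearMap.snd ℝ C_c(X, ℝ) ℝ).comp (Submodule.subtype _) }
  obtain ⟨G, hGf, hG⟩ := riesz_extension (edwardsPointedCone F hF hconst g x s) f
    (by
      rintro ⟨⟨φ, r⟩, hφ⟩ hmem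
      obtain rfl : φ = 0 := hφ
      exact hdom r hmem)
    (by
      rintro ⟨φ, r⟩
      obtain ⟨c, hc⟩ := (isCompact_range φ.continuous).bddBelow
      let d : ℝ := min c (-1)
      have hd : d < 0 := (min_le_right _ _).trans_lt (by norm_num)
      refine ⟨⟨(0, -d - r), rfl⟩, fun ε hε => ⟨_, hconst d hd, 0, le_rfl, fun y => ?_, ?_⟩⟩
      · have : d ≤ φ y := (min_le_left _ _).trans (hc ⟨y, rfl⟩)
        simpa using this
      · simp only [EReal.coe_le_coe_iff, Prod.mk_add_mk]
        linarith)
  have hGr : ∀ φ r, G (φ, r) = G (φ, 0) + r := by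
    intro φ r
    have h0 : G (0, r) = r := hGf ⟨(0, r), rfl⟩
    calc G (φ, r) = G ((φ, 0) + (0, r)) := by simp
      _ = G (φ, 0) + r := by rw [map_add, h0]
  have hlower : ∀ u ∈ F, ∀ a : ℝ, (a : EReal) ≤ u x → ∀ φ : C_c(X, ℝ),
      (∀ y, u y ≤ (φ y : EReal)) → a ≤ G (φ, 0) := by
    intro u hu a ha φ hφ
    have := hG (φ, -a) fun ε hε => ⟨u, hu, 0, le_rfl, fun y => by simpa using hφ y,
      le_trans (EReal.coe_le_coe_iff.2 (by simp only; linarith)) ha⟩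
    rw [hGr] at this
    linarith
  refine ⟨PositiveLinearMap.mk₀ (G.comp (LinearMap.inl ℝ _ _)) fun φ hφ => ?_, hlower,
    fun φ hφ => ?_⟩
  · refine le_of_forall_lt fun c hc => ?_
    have hc2 : c / 2 < 0 := by linarith
    have := hlower _ (hconst (c / 2) hc2) (c / 2) le_rfl φ fun y =>
      EReal.coe_le_coe_iff.2 (hc2.le.trans (hφ y))
    change c < G (φ, 0)
    linarith
  · have := hG (-φ, s) fun ε hε => ⟨_, hconst (-ε) (neg_lt_zero.2 hε), 1, zero_le_one,
      fun y => ?_, EReal.coe_le_coe_iff.2 (by simp only; linarith)⟩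
    · rw [hGr] at this
      have hneg : G (-φ, 0) = -G (φ, 0) := by
        rw [← map_neg]
        simp
      change G (φ, 0) ≤ s
      linarith
    · have h1 := add_le_add_right (hφ y) ((-(φ y) : ℝ) : EReal)
      rw [← EReal.coe_add, neg_add_cancel] at h1
      refine le_trans (EReal.coe_le_coe_iff.2 (by linarith)) (h1.trans_eq ?_)
      simp

lemma LowerSemicontinuous.exists_real_le {X : Type*} [TopologicalSpace X] [CompactSpace X]
    [Nonempty X] {g : X → EReal} (hg : LowerSemicontinuous g) (hgbot : ∀ y, g y ≠ ⊥) :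
    ∃ k : ℝ, 0 < k ∧ ∀ y, ((-k : ℝ) : EReal) ≤ g y := by
  obtain ⟨a, -, ha⟩ := (hg.lowerSemicontinuousOn univ).exists_isMinOn univ_nonempty isCompact_univ
  obtain ⟨c, -, hc⟩ := EReal.lt_iff_exists_real_btwn.1 (bot_lt_iff_ne_bot.2 (hgbot a))
  refine ⟨max 1 (-c), by positivity, fun y => ?_⟩
  refine le_trans (EReal.coe_le_coe_iff.2 ?_) (hc.le.trans (ha (mem_univ y)))
  linarith [le_max_right 1 (-c)]

/-- If the cone `F` contains all negative constant functions, then `S_x(g) = I_x(g)` for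
every lower semicontinuous `g : X → (-∞, ∞]` and every `x ∈ X`. -/
theorem edwards_of_neg_constants {X : Type*} [MetricSpace X] [CompactSpace X]
    [MeasurableSpace X] [BorelSpace X] (F : Set (X → EReal)) (hF : IsEdwardsCone F)
    (hconst : ∀ c : ℝ, c < 0 → (fun _ : X => (c : EReal)) ∈ F)
    (g : X → EReal) (hg : LowerSemicontinuous g) (hgbot : ∀ y, g y ≠ ⊥) :
    ∀ x : X, edwardsS F x g = edwardsI F x g := by
  intro x
  apply le_antisymm
  · refine sSup_le ?_
    rintro _ ⟨u, hu, hug, rfl⟩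
    refine le_sInf ?_
    rintro _ ⟨μ, hμ, rfl⟩
    exact (hμ u hu).trans (erealIntegral_mono μ hug)
  have : Nonempty X := ⟨x⟩
  obtain ⟨k, hk, hgk⟩ := hg.exists_real_le hgbot
  have hbot : edwardsS F x g ≠ ⊥ := by
    refine ne_bot_of_le_ne_bot (EReal.coe_ne_bot (-k)) ?_
    exact le_sSup ⟨_, hconst (-k) (neg_lt_zero.2 hk), hgk, rfl⟩
  rcases eq_or_ne (edwardsS F x g) ⊤ with htop | htop
  · rw [htop]
    exact le_top
  obtain ⟨s, hs⟩ : ∃ s : ℝ, edwardsS F x g = s := ⟨_, (EReal.coe_toReal htop hbot).symm⟩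
  obtain ⟨Λ, hΛF, hΛg⟩ := exists_positiveLinearMap_of_edwardsS_eq F hF hconst g x hs
  have hint : ∀ φ : C(X, ℝ), ∫ y, φ y ∂(RealRMK.rieszMeasure Λ) =
      Λ (CompactlySupportedContinuousMap.continuousMapEquiv φ) := fun φ =>
    RealRMK.integral_rieszMeasure Λ (CompactlySupportedContinuousMap.continuousMapEquiv φ)
  rw [hs]
  have hmem : RealRMK.rieszMeasure Λ ∈ edwardsM F x := by
    intro u hu
    obtain ⟨K, hK⟩ := hF.2.1 u hu
    refine EReal.ge_of_forall_gt_iff_ge.1 fun a ha => ?_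
    refine le_erealIntegral_of_forall_le_continuousMap (hF.1 u hu) (abs_nonneg K)
      (fun y => (hK y).trans (EReal.coe_le_coe_iff.2 (le_abs_self K))) fun φ hφ => ?_
    rw [hint]
    exact hΛF u hu a ha.le _ hφ
  calc edwardsI F x g ≤ erealIntegral (RealRMK.rieszMeasure Λ) g := sInf_le ⟨_, hmem, rfl⟩
    _ ≤ s := erealIntegral_le_of_forall_continuousMap_le hg hk.le hgk fun φ hφ => by
      rw [hint]
      exact hΛg _ hφ

end
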